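/- Let A = A(ω, ε) be the 4×4 Toh matrix with 0 < ω < 2 and ε > 0. If p_k(z) is a k-th worst-case GMRES polynomial of A, then the polynomial z ↦ p_k(−z) is also a k-th worst-case GMRES polynomial of A. In particular, for k = 3 one has p_3(z) ≠ p_3(−z), so the third worst-case GMRES polynomial of A is not uniquely determined. -/

import Mathlib

open Polynomial Matrix

/-- The Euclidean norm of a real vector. -/
noncomputable def euclNorm {ι : Type*} [Fintype ι] (v : ι → ℝ) : ℝ :=
  Real.sqrt (∑ i, v i ^ 2)

/-- The Euclidean norm of a complex vector. -/
noncomputable def euclNormC {ι : Type*} [Fintype ι] (v : ι → ℂ) : ℝ :=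
  Real.sqrt (∑ i, ‖v i‖ ^ 2)

/-- The Euclidean inner product of two real vectors. -/
noncomputable def edot {ι : Type*} [Fintype ι] (u v : ι → ℝ) : ℝ := ∑ i, u i * v i

/-- `p ∈ π_k`: real polynomials of degree at most `k` with value `1` at the origin. -/
def IsPik (k : ℕ) (p : Polynomial ℝ) : Prop := p.natDegree ≤ k ∧ p.eval 0 = 1

/-- `p ∈ π_{k,ℂ}`: complex polynomials of degree at most `k` with value `1` at the origin. -/
def IsPikC (k : ℕ) (p : Polynomial ℂ) : Prop := p.natDegree ≤ k ∧ p.eval 0 = 1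

/-- The `k`-th GMRES residual norm `min_{p ∈ π_k} ‖p(A)v‖`. -/
noncomputable def gmresVal {ι : Type*} [Fintype ι] [DecidableEq ι]
    (A : Matrix ι ι ℝ) (k : ℕ) (v : ι → ℝ) : ℝ :=
  sInf {s : ℝ | ∃ p : Polynomial ℝ, IsPik k p ∧ s = euclNorm ((Polynomial.aeval A p).mulVec v)}

/-- The `k`-th worst-case GMRES approximation `Ψ_k(A) = max_{‖v‖=1} min_{p ∈ π_k} ‖p(A)v‖`. -/
noncomputable def Psi {ι : Type*} [Fintype ι] [DecidableEq ι]
    (A : Matrix ι ι ℝ) (k : ℕ) : ℝ :=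
  sSup {r : ℝ | ∃ v : ι → ℝ, euclNorm v = 1 ∧ r = gmresVal A k v}

/-- `d(A)`: the degree of the minimal polynomial of `A`. -/
noncomputable def dA {ι : Type*} [Fintype ι] [DecidableEq ι] (A : Matrix ι ι ℝ) : ℕ :=
  (minpoly ℝ A).natDegree

/-- `d(A,b)`: the smallest degree of a nonzero polynomial `q` with `q(A)b = 0`. -/
noncomputable def dAb {ι : Type*} [Fintype ι] [DecidableEq ι]
    (A : Matrix ι ι ℝ) (b : ι → ℝ) : ℕ :=
  sInf {d : ℕ | ∃ q : Polynomial ℝ, q ≠ 0 ∧ q.natDegree = d ∧ (Polynomial.aeval A q).mulVec b = 0}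

/-- `r = GMRES(A,b,k)`: `r = p(A)b` for some `p ∈ π_k` minimizing `‖p(A)b‖` over `π_k`. -/
def IsGmresRes {ι : Type*} [Fintype ι] [DecidableEq ι]
    (A : Matrix ι ι ℝ) (k : ℕ) (b r : ι → ℝ) : Prop :=
  ∃ p : Polynomial ℝ, IsPik k p ∧ r = (Polynomial.aeval A p).mulVec b ∧
    ∀ q : Polynomial ℝ, IsPik k q → euclNorm r ≤ euclNorm ((Polynomial.aeval A q).mulVec b)

/-- `p` is the `k`-th GMRES polynomial of `A` and `b`: `p ∈ π_k` minimizes `‖p(A)b‖`. -/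
def IsGmresPoly {ι : Type*} [Fintype ι] [DecidableEq ι]
    (A : Matrix ι ι ℝ) (k : ℕ) (b : ι → ℝ) (p : Polynomial ℝ) : Prop :=
  IsPik k p ∧ ∀ q : Polynomial ℝ, IsPik k q →
    euclNorm ((Polynomial.aeval A p).mulVec b) ≤ euclNorm ((Polynomial.aeval A q).mulVec b)

/-- The Krylov subspace `K_k(A,b) = span{b, Ab, …, A^{k-1}b}`. -/
noncomputable def krylov {ι : Type*} [Fintype ι] [DecidableEq ι]
    (A : Matrix ι ι ℝ) (k : ℕ) (b : ι → ℝ) : Submodule ℝ (ι → ℝ) :=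
  Submodule.span ℝ (Set.range fun i : Fin k => (A ^ (i : ℕ)).mulVec b)

/-- `b` satisfies the cross equality for `A` and step `k`. -/
def CrossEq {ι : Type*} [Fintype ι] [DecidableEq ι]
    (A : Matrix ι ι ℝ) (k : ℕ) (b : ι → ℝ) : Prop :=
  ∀ r s : ι → ℝ, IsGmresRes A k b r → IsGmresRes Aᵀ k ((euclNorm r)⁻¹ • r) s →
    b = (euclNorm s)⁻¹ • s

/-- The Krylov matrix `K(v) = [Av, A²v, …, A^k v]`. -/
noncomputable def Kmat {n : ℕ} (A : Matrix (Fin n) (Fin n) ℝ) (k : ℕ) (v : Fin n → ℝ) :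
    Matrix (Fin n) (Fin k) ℝ :=
  Matrix.of fun i j => (A ^ ((j : ℕ) + 1)).mulVec v i

/-- `γ(v) = (K(v)ᵀK(v))⁻¹ K(v)ᵀ v`. -/
noncomputable def gammaVec {n : ℕ} (A : Matrix (Fin n) (Fin n) ℝ) (k : ℕ) (v : Fin n → ℝ) :
    Fin k → ℝ :=
  ((Kmat A k v)ᵀ * Kmat A k v)⁻¹ *ᵥ ((Kmat A k v)ᵀ *ᵥ v)

/-- `g(v) = min_{c ∈ ℝ^k} ‖v - K(v)c‖²`. -/
noncomputable def gFun {n : ℕ} (A : Matrix (Fin n) (Fin n) ℝ) (k : ℕ) (v : Fin n → ℝ) : ℝ :=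
  sInf {s : ℝ | ∃ c : Fin k → ℝ, s = euclNorm (v - Kmat A k v *ᵥ c) ^ 2}

/-- `p(z; c) = 1 - ∑_{j=1}^k c_j z^j`. -/
noncomputable def pPoly {k : ℕ} (c : Fin k → ℝ) : Polynomial ℝ :=
  1 - ∑ j : Fin k, Polynomial.C (c j) * Polynomial.X ^ ((j : ℕ) + 1)

/-- `f(c,v) = ‖p(A;c)v‖²`. -/
noncomputable def fFun {n k : ℕ} (A : Matrix (Fin n) (Fin n) ℝ) (c : Fin k → ℝ)
    (v : Fin n → ℝ) : ℝ :=
  euclNorm ((Polynomial.aeval A (pPoly c)).mulVec v) ^ 2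

/-- `F(c,v) = f(c,v)/(vᵀv)`. -/
noncomputable def FFun {n k : ℕ} (A : Matrix (Fin n) (Fin n) ℝ) (c : Fin k → ℝ)
    (v : Fin n → ℝ) : ℝ :=
  fFun A c v / edot v v

/-- The Toh matrix `A(ω, ε)`. -/
noncomputable def tohMatrix (ω ε : ℝ) : Matrix (Fin 4) (Fin 4) ℝ :=
  !![1, ε, 0, 0; 0, -1, ω / ε, 0; 0, 0, 1, ε; 0, 0, 0, -1]

/-- `p` is a `k`-th worst-case GMRES polynomial of `A`. -/
def IsWCPoly {ι : Type*} [Fintype ι] [DecidableEq ι]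
    (A : Matrix ι ι ℝ) (k : ℕ) (p : Polynomial ℝ) : Prop :=
  IsPik k p ∧ ∃ b : ι → ℝ, euclNorm b = 1 ∧
    (∀ q : Polynomial ℝ, IsPik k q →
      euclNorm ((Polynomial.aeval A p).mulVec b) ≤ euclNorm ((Polynomial.aeval A q).mulVec b)) ∧
    euclNorm ((Polynomial.aeval A p).mulVec b) = Psi A k

/-- The spectral (Euclidean operator) norm of a real matrix. -/
noncomputable def specNorm {ι : Type*} [Fintype ι] (M : Matrix ι ι ℝ) : ℝ :=
  sSup {r : ℝ | ∃ v : ι → ℝ, euclNorm v = 1 ∧ r = euclNorm (M *ᵥ v)}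

/-- The `k`-th ideal GMRES approximation `φ_k(A) = min_{p ∈ π_k} ‖p(A)‖`. -/
noncomputable def phiIdeal {ι : Type*} [Fintype ι] [DecidableEq ι]
    (A : Matrix ι ι ℝ) (k : ℕ) : ℝ :=
  sInf {r : ℝ | ∃ p : Polynomial ℝ, IsPik k p ∧ r = specNorm (Polynomial.aeval A p)}

/-- Complexification of a real matrix. -/
noncomputable def matC {ι : Type*} (A : Matrix ι ι ℝ) : Matrix ι ι ℂ :=
  A.map fun x => (x : ℂ)

/-- Complexification of a real vector. -/
noncomputable def vecC {ι : Type*} (b : ι → ℝ) : ι → ℂ := fun i => (b i : ℂ)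

/-- `Ψ_{k,ℂ,ℝ}(A)`: complex polynomials, real initial vectors. -/
noncomputable def PsiCR {ι : Type*} [Fintype ι] [DecidableEq ι]
    (A : Matrix ι ι ℝ) (k : ℕ) : ℝ :=
  sSup {r : ℝ | ∃ b : ι → ℝ, euclNorm b = 1 ∧
    r = sInf {s : ℝ | ∃ p : Polynomial ℂ, IsPikC k p ∧
      s = euclNormC ((Polynomial.aeval (matC A) p).mulVec (vecC b))}}

/-- `Ψ_{k,ℂ,ℂ}(A)`: complex polynomials, complex initial vectors. -/
noncomputable def PsiCC {ι : Type*} [Fintype ι] [DecidableEq ι]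
    (A : Matrix ι ι ℝ) (k : ℕ) : ℝ :=
  sSup {r : ℝ | ∃ b : ι → ℂ, euclNormC b = 1 ∧
    r = sInf {s : ℝ | ∃ p : Polynomial ℂ, IsPikC k p ∧
      s = euclNormC ((Polynomial.aeval (matC A) p).mulVec b)}}

/-- `Ψ_{k,ℝ,ℂ}(A)`: real polynomials, complex initial vectors. -/
noncomputable def PsiRC {ι : Type*} [Fintype ι] [DecidableEq ι]
    (A : Matrix ι ι ℝ) (k : ℕ) : ℝ :=
  sSup {r : ℝ | ∃ b : ι → ℂ, euclNormC b = 1 ∧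
    r = sInf {s : ℝ | ∃ p : Polynomial ℝ, IsPik k p ∧
      s = euclNormC ((Polynomial.aeval (matC A) (p.map (algebraMap ℝ ℂ))).mulVec b)}}

/-- `φ_{k,ℝ,ℝ}(A)`. -/
noncomputable def phiRR {ι : Type*} [Fintype ι] [DecidableEq ι]
    (A : Matrix ι ι ℝ) (k : ℕ) : ℝ :=
  sInf {r : ℝ | ∃ p : Polynomial ℝ, IsPik k p ∧
    r = sSup {s : ℝ | ∃ b : ι → ℝ, euclNorm b = 1 ∧
      s = euclNorm ((Polynomial.aeval A p).mulVec b)}}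

/-- `φ_{k,ℂ,ℝ}(A)`. -/
noncomputable def phiCR {ι : Type*} [Fintype ι] [DecidableEq ι]
    (A : Matrix ι ι ℝ) (k : ℕ) : ℝ :=
  sInf {r : ℝ | ∃ p : Polynomial ℂ, IsPikC k p ∧
    r = sSup {s : ℝ | ∃ b : ι → ℝ, euclNorm b = 1 ∧
      s = euclNormC ((Polynomial.aeval (matC A) p).mulVec (vecC b))}}

/-- `φ_{k,ℝ,ℂ}(A)`. -/
noncomputable def phiRC {ι : Type*} [Fintype ι] [DecidableEq ι]
    (A : Matrix ι ι ℝ) (k : ℕ) : ℝ :=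
  sInf {r : ℝ | ∃ p : Polynomial ℝ, IsPik k p ∧
    r = sSup {s : ℝ | ∃ b : ι → ℂ, euclNormC b = 1 ∧
      s = euclNormC ((Polynomial.aeval (matC A) (p.map (algebraMap ℝ ℂ))).mulVec b)}}

/-- `φ_{k,ℂ,ℂ}(A)`. -/
noncomputable def phiCC {ι : Type*} [Fintype ι] [DecidableEq ι]
    (A : Matrix ι ι ℝ) (k : ℕ) : ℝ :=
  sInf {r : ℝ | ∃ p : Polynomial ℂ, IsPikC k p ∧
    r = sSup {s : ℝ | ∃ b : ι → ℂ, euclNormC b = 1 ∧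
      s = euclNormC ((Polynomial.aeval (matC A) p).mulVec b)}}

/-!
Let `p` be the `k`-th GMRES polynomial of `A` and `b`, with residual `r = p(A)b`. Optimality says
`r ⟂ A K_k(A, b)`, hence `⟨r, q(A)b⟩ = ‖r‖²` for every `q ∈ π_k`, and Cauchy–Schwarz gives
`‖r‖² ≤ ‖q(Aᵀ)r‖ ‖b‖`. Thus a bound `Ψ_k(A) ≤ c` passes to `Aᵀ`, and `p` is a `k`-th worst-case
GMRES polynomial of `Aᵀ`, attained at `r / ‖r‖`, as soon as `p(Aᵀ)r = ‖r‖² b`. For a worst-case unit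
vector `b` this last identity holds because `b` maximizes the GMRES residual norm: to first order in
`t` the squared residual norm at `b + t w` is `‖r‖² + 2 t ⟨r, p(A)w⟩`, which may not exceed
`‖r‖² ‖b + t w‖²`, so `⟨r, p(A)w⟩ = ‖r‖² ⟨b, w⟩` for all `w`.

For the Toh matrix, `-A` is orthogonally similar to `Aᵀ`, so a worst-case polynomial `p(z)` of `A`
is one of `-A`, that is, `p(-z)` is one of `A`.

If the third worst-case polynomial were even, `p = 1 + g z²`, write `b = (x, y)` with `x, y ∈ ℝ²`,
so that `A²(x, y) = (x + ωy, y)`. The singular vector equation and `r ⟂ A²b` force `y = m x` with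
`ωm = -2` and `r` parallel to `(m x, x)`; then `A²b = (-x, m x)`, and orthogonality of `r` to `Ab`
and to `A³b` gives `x = 0`.
-/

open scoped Topology

section EuclNorm

variable {ι : Type*} [Fintype ι]

lemma euclNorm_eq_norm_toLp (v : ι → ℝ) : euclNorm v = ‖WithLp.toLp 2 v‖ := by
  simp [euclNorm, EuclideanSpace.norm_eq]

lemma inner_toLp_eq_dotProduct (u v : ι → ℝ) :
    inner ℝ (WithLp.toLp 2 u) (WithLp.toLp 2 v) = u ⬝ᵥ v := by
  rw [EuclideanSpace.inner_toLp_toLp, star_trivial, dotProduct_comm]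

lemma euclNorm_nonneg (v : ι → ℝ) : 0 ≤ euclNorm v :=
  Real.sqrt_nonneg _

lemma euclNorm_sq (v : ι → ℝ) : euclNorm v ^ 2 = v ⬝ᵥ v := by
  rw [euclNorm_eq_norm_toLp, ← real_inner_self_eq_norm_sq, inner_toLp_eq_dotProduct]

lemma euclNorm_eq_zero {v : ι → ℝ} : euclNorm v = 0 ↔ v = 0 := by
  rw [← sq_eq_zero_iff, euclNorm_sq, dotProduct_self_eq_zero]

lemma euclNorm_pos {v : ι → ℝ} (hv : v ≠ 0) : 0 < euclNorm v :=
  (euclNorm_nonneg v).lt_of_ne' (euclNorm_eq_zero.not.mpr hv)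

lemma euclNorm_smul (c : ℝ) (v : ι → ℝ) : euclNorm (c • v) = |c| * euclNorm v := by
  rw [euclNorm_eq_norm_toLp, WithLp.toLp_smul, norm_smul, Real.norm_eq_abs,
    ← euclNorm_eq_norm_toLp]

lemma euclNorm_inv_smul {v : ι → ℝ} (hv : v ≠ 0) (u : ι → ℝ) :
    euclNorm ((euclNorm v)⁻¹ • u) = (euclNorm v)⁻¹ * euclNorm u := by
  rw [euclNorm_smul, abs_of_pos (inv_pos.mpr (euclNorm_pos hv))]

lemma euclNorm_inv_smul_self {v : ι → ℝ} (hv : v ≠ 0) : euclNorm ((euclNorm v)⁻¹ • v) = 1 := by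
  rw [euclNorm_inv_smul hv, inv_mul_cancel₀ (euclNorm_pos hv).ne']

lemma dotProduct_le_euclNorm_mul_euclNorm (u v : ι → ℝ) :
    u ⬝ᵥ v ≤ euclNorm u * euclNorm v := by
  simpa only [euclNorm_eq_norm_toLp, inner_toLp_eq_dotProduct]
    using real_inner_le_norm (WithLp.toLp 2 u) (WithLp.toLp 2 v)

lemma euclNorm_mulVec_of_mem_orthogonalGroup [DecidableEq ι] {Q : Matrix ι ι ℝ}
    (hQ : Q ∈ orthogonalGroup ι ℝ) (v : ι → ℝ) : euclNorm (Q *ᵥ v) = euclNorm v := by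
  rw [← sq_eq_sq₀ (euclNorm_nonneg _) (euclNorm_nonneg _), euclNorm_sq, euclNorm_sq,
    dotProduct_mulVec, ← mulVec_transpose, mulVec_mulVec, (mem_orthogonalGroup_iff' _ _).mp hQ,
    one_mulVec]

end EuclNorm

section Perturbation

lemma eq_zero_of_eventually_mul_le_mul_sq {a C : ℝ} (h : ∀ᶠ t in 𝓝 (0 : ℝ), a * t ≤ C * t ^ 2) :
    a = 0 := by
  have hmin : IsLocalMin (fun t : ℝ => C * t ^ 2 - a * t) 0 := by
    filter_upwards [h] with t ht
    simpa using ht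
  have hderiv : HasDerivAt (fun t : ℝ => C * t ^ 2 - a * t) (-a) 0 := by
    simpa using ((hasDerivAt_pow 2 (0 : ℝ)).const_mul C).fun_sub
      ((hasDerivAt_id' (0 : ℝ)).const_mul a)
  exact neg_eq_zero.mp (hmin.hasDerivAt_eq_zero hderiv)

/-- Read `r` as a GMRES residual, `e` as its change under a change of the polynomial and
`t • (u + f)` as its change under a change of the initial vector: the free choice of `e` cannot
compensate the first-order effect `2 * t * inner ℝ r u`. -/
lemma norm_sq_add_linear_sub_sq_le_norm_add_sq {E : Type*} [NormedAddCommGroup E]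
    [InnerProductSpace ℝ E] {r u e f : E} {S t : ℝ} (hS : 0 ≤ S)
    (hre : inner ℝ r e = 0) (hf : ‖f‖ ≤ S * ‖e‖) (ht : |t| * S ≤ 1 / 2) :
    ‖r‖ ^ 2 + 2 * t * inner ℝ r u - 4 * (S * ‖r‖) * (S * ‖r‖ + ‖u‖) * t ^ 2 ≤
      ‖r + (e + t • (u + f))‖ ^ 2 := by
  set x := e + t • (u + f) with hx
  have he : ‖e‖ ≤ 2 * (‖x‖ + |t| * ‖u‖) := by
    have htf : |t| * ‖f‖ ≤ ‖e‖ / 2 := calc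
      |t| * ‖f‖ ≤ |t| * (S * ‖e‖) := by gcongr
      _ = |t| * S * ‖e‖ := by ring
      _ ≤ 1 / 2 * ‖e‖ := by gcongr
      _ = ‖e‖ / 2 := by ring
    have htriangle : ‖e‖ ≤ ‖x‖ + |t| * ‖u‖ + |t| * ‖f‖ := calc
      ‖e‖ = ‖x - t • u - t • f‖ := by rw [hx]; congr 1; module
      _ ≤ ‖x‖ + ‖t • u‖ + ‖t • f‖ :=
        (norm_sub_le _ _).trans (add_le_add_left (norm_sub_le _ _) _)
      _ = ‖x‖ + |t| * ‖u‖ + |t| * ‖f‖ := by simp only [norm_smul, Real.norm_eq_abs]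
    linarith
  have hcross : -(2 * (|t| * (S * ‖r‖)) * (‖x‖ + |t| * ‖u‖)) ≤ t * inner ℝ r f := by
    refine neg_le_of_abs_le ?_
    calc |t * inner ℝ r f| ≤ |t| * (‖r‖ * ‖f‖) := by
          rw [abs_mul]; gcongr; exact abs_real_inner_le_norm r f
      _ ≤ |t| * (‖r‖ * (S * (2 * (‖x‖ + |t| * ‖u‖)))) := by
          gcongr; exact hf.trans (mul_le_mul_of_nonneg_left he hS)
      _ = 2 * (|t| * (S * ‖r‖)) * (‖x‖ + |t| * ‖u‖) := by ring
  have hrx : inner ℝ r x = t * inner ℝ r u + t * inner ℝ r f := by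
    rw [hx, inner_add_right, hre, inner_smul_right, inner_add_right]
    ring
  rw [norm_add_sq_real, hrx, ← sq_abs t]
  linarith [sq_nonneg (‖x‖ - 2 * |t| * (S * ‖r‖))]

end Perturbation

section Pik

variable {k : ℕ} {p q s : ℝ[X]}

/-- The linear space of directions of the affine space `π_k`. -/
noncomputable def pikDirection (k : ℕ) : Submodule ℝ ℝ[X] :=
  degreeLE ℝ k ⊓ LinearMap.ker (leval 0)

lemma mem_pikDirection : s ∈ pikDirection k ↔ s.natDegree ≤ k ∧ s.eval 0 = 0 := by
  simp [pikDirection, mem_degreeLE, natDegree_le_iff_degree_le, leval]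

lemma X_pow_mem_pikDirection {n : ℕ} (hn : n ≠ 0) (hk : n ≤ k) :
    (X ^ n : ℝ[X]) ∈ pikDirection k :=
  mem_pikDirection.mpr ⟨by simpa using hk, by simp [hn]⟩

lemma IsPik.one (k : ℕ) : IsPik k 1 := by
  simp [IsPik]

lemma IsPik.sub_mem (hp : IsPik k p) (hq : IsPik k q) : p - q ∈ pikDirection k :=
  mem_pikDirection.mpr ⟨(natDegree_sub_le p q).trans (max_le hp.1 hq.1), by simp [hp.2, hq.2]⟩

lemma IsPik.add (hp : IsPik k p) (hs : s ∈ pikDirection k) : IsPik k (p + s) := by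
  rw [mem_pikDirection] at hs
  exact ⟨(natDegree_add_le p s).trans (max_le hp.1 hs.1), by simp [hp.2, hs.2]⟩

lemma IsPik.comp_neg_X (hp : IsPik k p) : IsPik k (p.comp (-X)) :=
  ⟨by simpa [natDegree_comp] using hp.1, by simpa [eval_comp] using hp.2⟩

end Pik

section Gmres

variable {ι : Type*} [Fintype ι] [DecidableEq ι] {A : Matrix ι ι ℝ} {k : ℕ} {b : ι → ℝ} {p : ℝ[X]}

lemma transpose_aeval (A : Matrix ι ι ℝ) (p : ℝ[X]) : (aeval A p)ᵀ = aeval Aᵀ p := by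
  simp [aeval_eq_sum_range, transpose_sum]

lemma aeval_conj_mulVec {Q : Matrix ι ι ℝ} (hQ : Q ∈ orthogonalGroup ι ℝ) (A : Matrix ι ι ℝ)
    (p : ℝ[X]) (b : ι → ℝ) : aeval (Q * A * Qᵀ) p *ᵥ (Q *ᵥ b) = Q *ᵥ (aeval A p *ᵥ b) := by
  have hconj : aeval (Q * A * Qᵀ) p = Q * aeval A p * Qᵀ :=
    aeval_algHom_apply (Unitary.conjStarAlgAut ℝ (Matrix ι ι ℝ) ⟨Q, hQ⟩) A p
  have hQQ : Qᵀ * Q = 1 := (mem_orthogonalGroup_iff' _ _).mp hQ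
  rw [hconj, mulVec_mulVec, mulVec_mulVec, mul_assoc, hQQ, mul_one]

lemma euclNorm_aeval_conj_mulVec {Q : Matrix ι ι ℝ} (hQ : Q ∈ orthogonalGroup ι ℝ)
    (A : Matrix ι ι ℝ) (p : ℝ[X]) (b : ι → ℝ) :
    euclNorm (aeval (Q * A * Qᵀ) p *ᵥ (Q *ᵥ b)) = euclNorm (aeval A p *ᵥ b) := by
  rw [aeval_conj_mulVec hQ, euclNorm_mulVec_of_mem_orthogonalGroup hQ]

/-- The map sending a direction `s` of `π_k` to `s(A)v`, whose range is `A K_k(A, v)`. -/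
noncomputable def krylovMap (A : Matrix ι ι ℝ) (k : ℕ) (v : ι → ℝ) :
    pikDirection k →ₗ[ℝ] EuclideanSpace ℝ ι where
  toFun s := WithLp.toLp 2 (aeval A s.1 *ᵥ v)
  map_add' s t := by simp [add_mulVec]
  map_smul' c s := by simp [smul_mulVec]

lemma krylovMap_apply (A : Matrix ι ι ℝ) (v : ι → ℝ) (s : pikDirection k) :
    krylovMap A k v s = WithLp.toLp 2 (aeval A s.1 *ᵥ v) :=
  rfl

namespace IsGmresPoly

lemma dotProduct_eq_zero (h : IsGmresPoly A k b p) {s : ℝ[X]} (hs : s ∈ pikDirection k) :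
    (aeval A p *ᵥ b) ⬝ᵥ (aeval A s *ᵥ b) = 0 := by
  set r := aeval A p *ᵥ b
  set y := aeval A s *ᵥ b
  suffices -2 * (r ⬝ᵥ y) = 0 by simpa using this
  refine eq_zero_of_eventually_mul_le_mul_sq (C := y ⬝ᵥ y) (.of_forall fun t => ?_)
  have hle := pow_le_pow_left₀ (euclNorm_nonneg _)
    (h.2 _ (h.1.add (Submodule.smul_mem _ t hs))) 2
  have hexpand : aeval A (p + t • s) *ᵥ b = r + t • y := by
    simp [add_mulVec, smul_mulVec, r, y]
  rw [hexpand, euclNorm_sq, euclNorm_sq, dotProduct_add, add_dotProduct, add_dotProduct] at hle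
  simp only [smul_dotProduct, dotProduct_smul, smul_eq_mul, dotProduct_comm y r] at hle
  linarith

lemma dotProduct_aeval_mulVec_eq (h : IsGmresPoly A k b p) {q : ℝ[X]} (hq : IsPik k q) :
    (aeval A p *ᵥ b) ⬝ᵥ (aeval A q *ᵥ b) = euclNorm (aeval A p *ᵥ b) ^ 2 := by
  have horth := h.dotProduct_eq_zero (hq.sub_mem h.1)
  rw [map_sub, sub_mulVec, dotProduct_sub, sub_eq_zero] at horth
  rw [horth, euclNorm_sq]

lemma sq_euclNorm_le_transpose (h : IsGmresPoly A k b p) {q : ℝ[X]} (hq : IsPik k q) :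
    euclNorm (aeval A p *ᵥ b) ^ 2 ≤ euclNorm (aeval Aᵀ q *ᵥ (aeval A p *ᵥ b)) * euclNorm b := by
  rw [← h.dotProduct_aeval_mulVec_eq hq, dotProduct_mulVec, ← mulVec_transpose, transpose_aeval]
  exact dotProduct_le_euclNorm_mul_euclNorm _ _

lemma of_dotProduct_eq_zero (hp : IsPik k p)
    (horth : ∀ s ∈ pikDirection k, (aeval A p *ᵥ b) ⬝ᵥ (aeval A s *ᵥ b) = 0) :
    IsGmresPoly A k b p := by
  refine ⟨hp, fun q hq => ?_⟩
  have hdot : (aeval A p *ᵥ b) ⬝ᵥ (aeval A q *ᵥ b) = euclNorm (aeval A p *ᵥ b) ^ 2 := by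
    have := horth _ (hq.sub_mem hp)
    rwa [map_sub, sub_mulVec, dotProduct_sub, sub_eq_zero, ← euclNorm_sq] at this
  have hCS := dotProduct_le_euclNorm_mul_euclNorm (aeval A p *ᵥ b) (aeval A q *ᵥ b)
  rw [hdot, sq] at hCS
  rcases (euclNorm_nonneg (aeval A p *ᵥ b)).eq_or_lt with hzero | hpos
  · exact hzero ▸ euclNorm_nonneg _
  · exact le_of_mul_le_mul_left hCS hpos

end IsGmresPoly

lemma exists_isGmresPoly (A : Matrix ι ι ℝ) (k : ℕ) (b : ι → ℝ) : ∃ p, IsGmresPoly A k b p := by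
  set K := LinearMap.range (krylovMap A k b)
  obtain ⟨s, hs⟩ : K.starProjection (WithLp.toLp 2 b) ∈ K := K.starProjection_apply_mem _
  refine ⟨1 + -s.1, .of_dotProduct_eq_zero ((IsPik.one k).add (neg_mem s.2)) fun t ht => ?_⟩
  have horth := Submodule.inner_left_of_mem_orthogonal
    (LinearMap.mem_range_self (krylovMap A k b) ⟨t, ht⟩)
    (K.sub_starProjection_mem_orthogonal (WithLp.toLp 2 b))
  rw [← hs, krylovMap_apply, krylovMap_apply, ← WithLp.toLp_sub, inner_toLp_eq_dotProduct] at horth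
  simpa [add_mulVec, neg_mulVec, sub_eq_add_neg] using horth

lemma exists_isPik_mulVec_eq_zero (hA : IsUnit A.det) {s : ℝ[X]} (hs : s ≠ 0)
    (hdeg : s.natDegree ≤ k) (hsb : aeval A s *ᵥ b = 0) :
    ∃ q, IsPik k q ∧ aeval A q *ᵥ b = 0 := by
  obtain ⟨q, hfactor, hq⟩ := s.exists_eq_pow_rootMultiplicity_mul_and_not_dvd hs 0
  rw [map_zero, sub_zero, X_dvd_iff, coeff_zero_eq_eval_zero] at hq
  rw [map_zero, sub_zero] at hfactor
  generalize s.rootMultiplicity 0 = n at hfactor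
  subst hfactor
  have hqb : aeval A q *ᵥ b = 0 := by
    have hinj := mulVec_injective_of_isUnit ((isUnit_iff_isUnit_det A).mpr hA |>.pow n)
    refine hinj ?_
    simpa [mulVec_mulVec] using hsb
  refine ⟨(q.eval 0)⁻¹ • q, ⟨?_, by simp [hq]⟩, by simp [smul_mulVec, hqb]⟩
  calc ((q.eval 0)⁻¹ • q).natDegree ≤ q.natDegree := natDegree_smul_le _ _
    _ ≤ (X ^ n * q).natDegree := natDegree_le_of_dvd (dvd_mul_left q _) hs
    _ ≤ k := hdeg

lemma krylovMap_injective (hA : IsUnit A.det) (h : IsGmresPoly A k b p)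
    (hr : aeval A p *ᵥ b ≠ 0) : Function.Injective (krylovMap A k b) := by
  refine (injective_iff_map_eq_zero _).mpr fun s hs => by_contra fun hs0 => hr ?_
  rw [krylovMap_apply, WithLp.toLp_eq_zero] at hs
  obtain ⟨q, hq, hqb⟩ := exists_isPik_mulVec_eq_zero hA (Subtype.coe_ne_coe.mpr hs0)
    (mem_pikDirection.mp s.2).1 hs
  have hle := h.2 q hq
  rw [hqb, euclNorm_eq_zero.mpr rfl] at hle
  exact euclNorm_eq_zero.mp (hle.antisymm (euclNorm_nonneg _))

lemma exists_norm_krylovMap_le (hb : Function.Injective (krylovMap A k b)) (w : ι → ℝ) :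
    ∃ S, 0 ≤ S ∧ ∀ s, ‖krylovMap A k w s‖ ≤ S * ‖krylovMap A k b s‖ := by
  obtain ⟨g, hg⟩ := (krylovMap A k b).exists_leftInverse_of_injective (LinearMap.ker_eq_bot.mpr hb)
  set L := LinearMap.toContinuousLinearMap (krylovMap A k w ∘ₗ g)
  refine ⟨‖L‖, norm_nonneg L, fun s => ?_⟩
  have hL : L (krylovMap A k b s) = krylovMap A k w s :=
    congrArg (krylovMap A k w) (LinearMap.congr_fun hg s)
  exact hL ▸ L.le_opNorm _

/-- `c` bounds the `k`-th GMRES residual norms of `A` relative to the initial vector; for `0 ≤ c`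
this says `Ψ_k(A) ≤ c`, without suprema and infima. -/
def GmresBound (A : Matrix ι ι ℝ) (k : ℕ) (c : ℝ) : Prop :=
  ∀ v, ∃ q, IsPik k q ∧ euclNorm (aeval A q *ᵥ v) ≤ c * euclNorm v

lemma gmresVal_le {q : ℝ[X]} (hq : IsPik k q) (v : ι → ℝ) :
    gmresVal A k v ≤ euclNorm (aeval A q *ᵥ v) := by
  refine csInf_le ⟨0, ?_⟩ ⟨q, hq, rfl⟩
  rintro _ ⟨p, -, rfl⟩
  exact euclNorm_nonneg _

lemma IsGmresPoly.gmresVal_eq (h : IsGmresPoly A k b p) :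
    gmresVal A k b = euclNorm (aeval A p *ᵥ b) := by
  refine (gmresVal_le h.1 b).antisymm (le_csInf ⟨_, p, h.1, rfl⟩ ?_)
  rintro _ ⟨q, hq, rfl⟩
  exact h.2 q hq

lemma gmresVal_le_psi {v : ι → ℝ} (hv : euclNorm v = 1) : gmresVal A k v ≤ Psi A k := by
  refine le_csSup ⟨1, ?_⟩ ⟨v, hv, rfl⟩
  rintro _ ⟨w, hw, rfl⟩
  simpa [hw] using gmresVal_le (A := A) (IsPik.one k) w

namespace GmresBound

variable {c : ℝ}

lemma of_psi (A : Matrix ι ι ℝ) (k : ℕ) : GmresBound A k (Psi A k) := by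
  intro v
  obtain rfl | hv := eq_or_ne v 0
  · exact ⟨1, IsPik.one k, by simp [euclNorm_eq_zero.mpr]⟩
  obtain ⟨q, hq⟩ := exists_isGmresPoly A k ((euclNorm v)⁻¹ • v)
  refine ⟨q, hq.1, ?_⟩
  have hle := gmresVal_le_psi (A := A) (k := k) (euclNorm_inv_smul_self hv)
  rwa [hq.gmresVal_eq, mulVec_smul, euclNorm_inv_smul hv, inv_mul_le_iff₀' (euclNorm_pos hv)]
    at hle

lemma psi_le (h : GmresBound A k c) (hc : 0 ≤ c) : Psi A k ≤ c := by
  refine Real.sSup_le ?_ hc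
  rintro _ ⟨v, hv, rfl⟩
  obtain ⟨q, hq, hle⟩ := h v
  simpa [hv] using (gmresVal_le hq v).trans hle

lemma transpose (h : GmresBound A k c) (hc : 0 ≤ c) : GmresBound Aᵀ k c := by
  intro v
  obtain ⟨p, hp⟩ := exists_isGmresPoly Aᵀ k v
  refine ⟨p, hp.1, ?_⟩
  set r := aeval Aᵀ p *ᵥ v
  obtain ⟨q, hq, hle⟩ := h r
  rcases (euclNorm_nonneg r).eq_or_lt with hr | hr
  · exact hr ▸ mul_nonneg hc (euclNorm_nonneg v)
  refine le_of_mul_le_mul_right ?_ hr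
  calc euclNorm r * euclNorm r = euclNorm r ^ 2 := (sq _).symm
    _ ≤ euclNorm (aeval Aᵀᵀ q *ᵥ r) * euclNorm v := hp.sq_euclNorm_le_transpose hq
    _ ≤ c * euclNorm r * euclNorm v := by
      rw [transpose_transpose]
      exact mul_le_mul_of_nonneg_right hle (euclNorm_nonneg v)
    _ = c * euclNorm v * euclNorm r := by ring

lemma neg (h : GmresBound A k c) : GmresBound (-A) k c := by
  intro v
  obtain ⟨q, hq, hle⟩ := h v
  exact ⟨q.comp (-X), hq.comp_neg_X, by simpa [aeval_comp] using hle⟩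

lemma conj {Q : Matrix ι ι ℝ} (hQ : Q ∈ orthogonalGroup ι ℝ) (h : GmresBound A k c) :
    GmresBound (Q * A * Qᵀ) k c := by
  intro v
  have hv : Q *ᵥ (Qᵀ *ᵥ v) = v := by
    rw [mulVec_mulVec, show Q * Qᵀ = 1 from (mem_orthogonalGroup_iff _ _).mp hQ, one_mulVec]
  obtain ⟨q, hq, hle⟩ := h (Qᵀ *ᵥ v)
  rw [← euclNorm_aeval_conj_mulVec hQ, ← euclNorm_mulVec_of_mem_orthogonalGroup hQ (Qᵀ *ᵥ v),
    hv] at hle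
  exact ⟨q, hq, hle⟩

end GmresBound

namespace IsGmresPoly

lemma neg (h : IsGmresPoly A k b p) : IsGmresPoly (-A) k b (p.comp (-X)) :=
  ⟨h.1.comp_neg_X, fun q hq => by simpa [aeval_comp] using h.2 _ hq.comp_neg_X⟩

lemma conj {Q : Matrix ι ι ℝ} (hQ : Q ∈ orthogonalGroup ι ℝ) (h : IsGmresPoly A k b p) :
    IsGmresPoly (Q * A * Qᵀ) k (Q *ᵥ b) p :=
  ⟨h.1, fun q hq => by simpa only [euclNorm_aeval_conj_mulVec hQ] using h.2 q hq⟩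

end IsGmresPoly

lemma isWCPoly_iff : IsWCPoly A k p ↔ ∃ b, euclNorm b = 1 ∧ IsGmresPoly A k b p ∧
    GmresBound A k (euclNorm (aeval A p *ᵥ b)) := by
  constructor
  · rintro ⟨hp, b, hb, hmin, hpsi⟩
    exact ⟨b, hb, ⟨hp, hmin⟩, hpsi ▸ GmresBound.of_psi A k⟩
  · rintro ⟨b, hb, h, hbound⟩
    exact ⟨h.1, b, hb, h.2,
      (h.gmresVal_eq ▸ gmresVal_le_psi hb).antisymm (hbound.psi_le (euclNorm_nonneg _))⟩

namespace IsGmresPoly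

lemma exists_eventually_sq_euclNorm_ge (hA : IsUnit A.det) (h : IsGmresPoly A k b p)
    (hr : aeval A p *ᵥ b ≠ 0) (w : ι → ℝ) :
    ∃ C, ∀ᶠ t in 𝓝 (0 : ℝ), ∀ q, IsPik k q →
      euclNorm (aeval A p *ᵥ b) ^ 2 + 2 * t * ((aeval A p *ᵥ b) ⬝ᵥ (aeval A p *ᵥ w)) - C * t ^ 2 ≤
        euclNorm (aeval A q *ᵥ (b + t • w)) ^ 2 := by
  obtain ⟨S, hS, hSle⟩ := exists_norm_krylovMap_le (krylovMap_injective hA h hr) w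
  set r := aeval A p *ᵥ b with hrdef
  set u := aeval A p *ᵥ w with hudef
  have hsmall : ∀ᶠ t in 𝓝 (0 : ℝ), |t| * S ≤ 1 / 2 :=
    (by fun_prop : Continuous fun t : ℝ => |t| * S).tendsto' 0 0 (by simp)
      |>.eventually_le_const (by norm_num)
  refine ⟨4 * (S * euclNorm r) * (S * euclNorm r + euclNorm u), ?_⟩
  filter_upwards [hsmall] with t ht q hq
  set s : pikDirection k := ⟨q - p, hq.sub_mem h.1⟩ with hs
  have horth : inner ℝ (WithLp.toLp 2 r) (krylovMap A k b s) = 0 := by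
    rw [krylovMap_apply, inner_toLp_eq_dotProduct, h.dotProduct_eq_zero s.2]
  have hres : WithLp.toLp 2 r + (krylovMap A k b s + t • (WithLp.toLp 2 u + krylovMap A k w s)) =
      WithLp.toLp 2 (aeval A q *ᵥ (b + t • w)) := by
    simp only [krylovMap_apply, hs, hrdef, hudef, ← WithLp.toLp_add, ← WithLp.toLp_smul, map_sub,
      sub_mulVec, mulVec_add, mulVec_smul]
    congr 1
    module
  have hlower := norm_sq_add_linear_sub_sq_le_norm_add_sq (u := WithLp.toLp 2 u) hS horth
    (hSle s) ht
  simpa only [hres, inner_toLp_eq_dotProduct, ← euclNorm_eq_norm_toLp] using hlower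

lemma dotProduct_aeval_mulVec_eq_of_gmresBound (hA : IsUnit A.det) (hb : euclNorm b = 1)
    (h : IsGmresPoly A k b p) (hbound : GmresBound A k (euclNorm (aeval A p *ᵥ b)))
    (hr : aeval A p *ᵥ b ≠ 0) (w : ι → ℝ) :
    (aeval A p *ᵥ b) ⬝ᵥ (aeval A p *ᵥ w) = euclNorm (aeval A p *ᵥ b) ^ 2 * (b ⬝ᵥ w) := by
  obtain ⟨C, hC⟩ := h.exists_eventually_sq_euclNorm_ge hA hr w
  set r := aeval A p *ᵥ b
  set u := aeval A p *ᵥ w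
  suffices 2 * (r ⬝ᵥ u - euclNorm r ^ 2 * (b ⬝ᵥ w)) = 0 by linarith
  refine eq_zero_of_eventually_mul_le_mul_sq (C := euclNorm r ^ 2 * (w ⬝ᵥ w) + C) ?_
  filter_upwards [hC] with t hlower
  obtain ⟨q, hq, hle⟩ := hbound (b + t • w)
  have hupper : euclNorm (aeval A q *ᵥ (b + t • w)) ^ 2 ≤
      euclNorm r ^ 2 * (1 + 2 * t * (b ⬝ᵥ w) + t ^ 2 * (w ⬝ᵥ w)) := calc
    _ ≤ (euclNorm r * euclNorm (b + t • w)) ^ 2 := pow_le_pow_left₀ (euclNorm_nonneg _) hle 2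
    _ = euclNorm r ^ 2 * (1 + 2 * t * (b ⬝ᵥ w) + t ^ 2 * (w ⬝ᵥ w)) := by
      rw [mul_pow, euclNorm_sq (b + t • w), dotProduct_add, add_dotProduct, add_dotProduct,
        ← euclNorm_sq b, hb]
      simp only [smul_dotProduct, dotProduct_smul, smul_eq_mul, dotProduct_comm w b]
      ring
  linarith [hlower q hq]

lemma transpose_mulVec_eq_sq_smul (hA : IsUnit A.det) (hb : euclNorm b = 1)
    (h : IsGmresPoly A k b p) (hbound : GmresBound A k (euclNorm (aeval A p *ᵥ b))) :
    (aeval A p)ᵀ *ᵥ (aeval A p *ᵥ b) = euclNorm (aeval A p *ᵥ b) ^ 2 • b := by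
  obtain hr | hr := eq_or_ne (aeval A p *ᵥ b) 0
  · simp [hr, euclNorm_eq_zero.mpr]
  refine dotProduct_eq _ _ fun w => ?_
  rw [mulVec_transpose, ← dotProduct_mulVec, smul_dotProduct, smul_eq_mul,
    h.dotProduct_aeval_mulVec_eq_of_gmresBound hA hb hbound hr]

lemma exists_transpose (hA : IsUnit A.det) (hb : euclNorm b = 1) (h : IsGmresPoly A k b p)
    (hbound : GmresBound A k (euclNorm (aeval A p *ᵥ b))) :
    ∃ b', euclNorm b' = 1 ∧ IsGmresPoly Aᵀ k b' p ∧
      euclNorm (aeval Aᵀ p *ᵥ b') = euclNorm (aeval A p *ᵥ b) := by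
  have hsing := h.transpose_mulVec_eq_sq_smul hA hb hbound
  have hmin (q : ℝ[X]) (hq : IsPik k q) := h.sq_euclNorm_le_transpose hq
  rw [transpose_aeval] at hsing
  set r := aeval A p *ᵥ b
  obtain hr | hr := eq_or_ne r 0
  · obtain ⟨v, hv, hpv⟩ : ∃ v ≠ 0, (aeval A p)ᵀ *ᵥ v = 0 := by
      rw [exists_mulVec_eq_zero_iff, det_transpose, ← exists_mulVec_eq_zero_iff]
      exact ⟨b, fun hb0 => by simp [hb0, euclNorm_eq_zero.mpr] at hb, hr⟩
    have hres : euclNorm (aeval Aᵀ p *ᵥ ((euclNorm v)⁻¹ • v)) = 0 := by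
      rw [mulVec_smul, ← transpose_aeval, hpv, smul_zero, euclNorm_eq_zero]
    exact ⟨_, euclNorm_inv_smul_self hv, ⟨h.1, fun q _ => hres ▸ euclNorm_nonneg _⟩,
      hres.trans (euclNorm_eq_zero.mpr hr).symm⟩
  · have hres : euclNorm (aeval Aᵀ p *ᵥ ((euclNorm r)⁻¹ • r)) = euclNorm r := by
      rw [mulVec_smul, hsing, euclNorm_inv_smul hr, euclNorm_smul, hb, abs_sq, mul_one, sq,
        inv_mul_cancel_left₀ (euclNorm_pos hr).ne']
    refine ⟨_, euclNorm_inv_smul_self hr, ⟨h.1, fun q hq => ?_⟩, hres⟩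
    rw [hres, mulVec_smul, euclNorm_inv_smul hr, le_inv_mul_iff₀ (euclNorm_pos hr), ← sq]
    simpa [hb] using hmin q hq

end IsGmresPoly

namespace IsWCPoly

lemma transpose (hA : IsUnit A.det) (hp : IsWCPoly A k p) : IsWCPoly Aᵀ k p := by
  obtain ⟨b, hb, h, hbound⟩ := isWCPoly_iff.mp hp
  obtain ⟨b', hb', h', hnorm⟩ := h.exists_transpose hA hb hbound
  exact isWCPoly_iff.mpr ⟨b', hb', h', hnorm ▸ hbound.transpose (euclNorm_nonneg _)⟩

lemma neg (hp : IsWCPoly A k p) : IsWCPoly (-A) k (p.comp (-X)) := by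
  obtain ⟨b, hb, h, hbound⟩ := isWCPoly_iff.mp hp
  exact isWCPoly_iff.mpr ⟨b, hb, h.neg, by simpa [aeval_comp] using hbound.neg⟩

lemma conj {Q : Matrix ι ι ℝ} (hQ : Q ∈ orthogonalGroup ι ℝ) (hp : IsWCPoly A k p) :
    IsWCPoly (Q * A * Qᵀ) k p := by
  obtain ⟨b, hb, h, hbound⟩ := isWCPoly_iff.mp hp
  exact isWCPoly_iff.mpr ⟨Q *ᵥ b, hb ▸ euclNorm_mulVec_of_mem_orthogonalGroup hQ b, h.conj hQ,
    (euclNorm_aeval_conj_mulVec hQ A p b).symm ▸ hbound.conj hQ⟩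

end IsWCPoly

end Gmres

section Even

lemma coeff_eq_zero_of_comp_neg_X_eq {p : ℝ[X]} (hp : p.comp (-X) = p) {n : ℕ} (hn : Odd n) :
    p.coeff n = 0 := by
  have h := comp_C_mul_X_coeff (p := p) (r := -1) (n := n)
  rw [map_neg, map_one, neg_one_mul, hp, hn.neg_one_pow] at h
  linarith

lemma IsPik.exists_eq_one_add_C_mul_X_sq {p : ℝ[X]} (hp : IsPik 3 p) (heven : p.comp (-X) = p) :
    ∃ g, p = 1 + C g * X ^ 2 := by
  refine ⟨p.coeff 2, ?_⟩
  have h0 : p.coeff 0 = 1 := by rw [coeff_zero_eq_eval_zero, hp.2]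
  have h1 := coeff_eq_zero_of_comp_neg_X_eq heven (n := 1) (by decide)
  have h3 := coeff_eq_zero_of_comp_neg_X_eq heven (n := 3) (by decide)
  conv_lhs => rw [p.as_sum_range_C_mul_X_pow' (Nat.lt_succ_of_le hp.1)]
  simp [Finset.sum_range_succ, h0, h1, h3]

end Even

section VecAppend

variable {m n o : ℕ}

lemma vecAppend_dotProduct_vecAppend (ho : o = m + n) (x u : Fin m → ℝ) (y v : Fin n → ℝ) :
    vecAppend ho x y ⬝ᵥ vecAppend ho u v = x ⬝ᵥ u + y ⬝ᵥ v := by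
  subst ho
  simp [vecAppend, dotProduct, Fin.sum_univ_add]

lemma smul_vecAppend (ho : o = m + n) (c : ℝ) (x : Fin m → ℝ) (y : Fin n → ℝ) :
    c • vecAppend ho x y = vecAppend ho (c • x) (c • y) := by
  ext i
  simp [vecAppend_eq_ite]

lemma vecAppend_inj (ho : o = m + n) {x u : Fin m → ℝ} {y v : Fin n → ℝ} :
    vecAppend ho x y = vecAppend ho u v ↔ x = u ∧ y = v := by
  subst ho
  exact ((Fin.appendEquiv m n).injective.eq_iff (a := (x, y)) (b := (u, v))).trans Prod.mk_inj

lemma exists_vecAppend_eq (ho : o = m + n) (b : Fin o → ℝ) : ∃ x y, vecAppend ho x y = b := by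
  subst ho
  exact ⟨fun i => b (Fin.castAdd n i), fun i => b (Fin.natAdd m i), Fin.append_castAdd_natAdd⟩

end VecAppend

section Toh

variable {ω ε : ℝ} {k : ℕ} {p : ℝ[X]}

/-- The signed flip conjugating `A(ω, ε)ᵀ` into `-A(ω, ε)`. -/
def tohFlip : Matrix (Fin 4) (Fin 4) ℝ :=
  !![0, 0, 0, 1; 0, 0, -1, 0; 0, 1, 0, 0; -1, 0, 0, 0]

lemma tohFlip_mem_orthogonalGroup : tohFlip ∈ orthogonalGroup (Fin 4) ℝ := by
  refine (mem_orthogonalGroup_iff _ _).mpr ?_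
  ext i j
  fin_cases i <;> fin_cases j <;>
    simp [tohFlip, mul_apply, Fin.sum_univ_four]

lemma tohFlip_mul_transpose_tohMatrix_mul (ω ε : ℝ) :
    tohFlip * (tohMatrix ω ε)ᵀ * tohFlipᵀ = -tohMatrix ω ε := by
  have hanticomm : tohFlip * (tohMatrix ω ε)ᵀ = -tohMatrix ω ε * tohFlip := by
    ext i j
    fin_cases i <;> fin_cases j <;> simp [tohFlip, tohMatrix, mul_apply, Fin.sum_univ_four]
  have hQQ : tohFlip * tohFlipᵀ = 1 := (mem_orthogonalGroup_iff _ _).mp tohFlip_mem_orthogonalGroup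
  rw [hanticomm, mul_assoc, hQQ, mul_one]

lemma isUnit_det_tohMatrix (ω ε : ℝ) : IsUnit (tohMatrix ω ε).det := by
  have htri : (tohMatrix ω ε).IsUpperTriangular := by
    intro i j hij
    fin_cases i <;> fin_cases j <;> simp [tohMatrix] at hij ⊢
  rw [det_of_isUpperTriangular htri]
  simp [tohMatrix, Fin.prod_univ_four]

lemma IsWCPoly.comp_neg_X_tohMatrix (hp : IsWCPoly (tohMatrix ω ε) k p) :
    IsWCPoly (tohMatrix ω ε) k (p.comp (-X)) := by
  have hneg : IsWCPoly (-tohMatrix ω ε) k p := tohFlip_mul_transpose_tohMatrix_mul ω ε ▸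
    (hp.transpose (isUnit_det_tohMatrix ω ε)).conj tohFlip_mem_orthogonalGroup
  simpa only [neg_neg] using hneg.neg

lemma not_gmresBound_tohMatrix_zero (hω : ω ≠ 0) (hε : ε ≠ 0) :
    ¬ GmresBound (tohMatrix ω ε) 3 0 := by
  intro h
  obtain ⟨q, hq, hle⟩ := h ![0, 0, 0, 1]
  rw [zero_mul, (euclNorm_nonneg _).ge_iff_eq', euclNorm_eq_zero,
    aeval_eq_sum_range' (Nat.lt_succ_of_le hq.1)] at hle
  have h0 : q.coeff 0 = 1 := by rw [coeff_zero_eq_eval_zero, hq.2]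
  have hres : ![q.coeff 3 * (ω * ε), (q.coeff 2 - q.coeff 3) * ω, (q.coeff 1 + q.coeff 3) * ε,
      1 - q.coeff 1 + q.coeff 2 - q.coeff 3] = 0 := by
    rw [← hle]
    ext i
    fin_cases i <;>
      simp [Finset.sum_range_succ, h0, pow_succ, tohMatrix, mulVec, dotProduct,
        Fin.sum_univ_four] <;> grind
  have h3 : q.coeff 3 = 0 := by simpa [hω, hε] using congrFun hres 0
  have h2 : q.coeff 2 = 0 := by simpa [hω, h3] using congrFun hres 1
  have h1 : q.coeff 1 = 0 := by simpa [hε, h3] using congrFun hres 2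
  simpa [h1, h2, h3] using congrFun hres 3

lemma tohMatrix_sq_mulVec (hε : ε ≠ 0) (x y : Fin 2 → ℝ) :
    tohMatrix ω ε ^ 2 *ᵥ (vecAppend rfl x y : Fin 4 → ℝ) = vecAppend rfl (x + ω • y) y := by
  ext i
  rw [sq, ← mulVec_mulVec]
  fin_cases i <;>
    simp [vecAppend_eq_ite, tohMatrix, mulVec, dotProduct, Fin.sum_univ_four] <;>
    field_simp <;> ring

lemma transpose_tohMatrix_sq_mulVec (hε : ε ≠ 0) (x y : Fin 2 → ℝ) :
    (tohMatrix ω ε)ᵀ ^ 2 *ᵥ (vecAppend rfl x y : Fin 4 → ℝ) = vecAppend rfl x (ω • x + y) := by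
  ext i
  rw [sq, ← mulVec_mulVec]
  fin_cases i <;>
    simp [vecAppend_eq_ite, tohMatrix, mulVec, dotProduct, Fin.sum_univ_four] <;>
    field_simp <;> ring

lemma aeval_one_add_C_mul_X_sq_mulVec {ι : Type*} [Fintype ι] [DecidableEq ι] (A : Matrix ι ι ℝ)
    (g : ℝ) (v : ι → ℝ) : aeval A (1 + C g * X ^ 2) *ᵥ v = v + g • (A ^ 2 *ᵥ v) := by
  simp [add_mulVec, ← Algebra.smul_def, smul_mulVec]

lemma exists_eq_smul_of_singular {E : Type*} [AddCommGroup E] [Module ℝ E]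
    {x y : E} {a c l : ℝ} (ha : a ≠ 0) (hc : c ≠ 0) (hxy : x ≠ 0 ∨ y ≠ 0)
    (hx : a • (a • x + c • y) = l • x) (hy : c • (a • x + c • y) + a • (a • y) = l • y) :
    x ≠ 0 ∧ ∃ m, y = m • x ∧ a + c * m = a * m ^ 2 := by
  obtain ⟨m, rfl⟩ : ∃ m, l = a ^ 2 + a * c * m := ⟨(l - a ^ 2) / (a * c), by field_simp; ring⟩
  obtain rfl : y = m • x := by
    refine smul_right_injective E (mul_ne_zero ha hc) ?_
    linear_combination (norm := module) hx
  have hx0 : x ≠ 0 := by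
    rintro rfl
    simp at hxy
  have hsq : (c * (a + c * m - a * m ^ 2)) • x = 0 := by
    linear_combination (norm := module) hy
  refine ⟨hx0, m, rfl, ?_⟩
  simpa [hx0, hc, sub_eq_zero] using hsq

lemma aeval_even_tohMatrix_mulVec (hε : ε ≠ 0) (g : ℝ) (x y : Fin 2 → ℝ) :
    aeval (tohMatrix ω ε) (1 + C g * X ^ 2) *ᵥ (vecAppend rfl x y : Fin 4 → ℝ) =
      vecAppend rfl ((1 + g) • x + (g * ω) • y) ((1 + g) • y) := by
  rw [aeval_one_add_C_mul_X_sq_mulVec, tohMatrix_sq_mulVec hε]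
  ext i
  fin_cases i <;> simp [vecAppend_eq_ite] <;> ring

lemma aeval_even_transpose_tohMatrix_mulVec (hε : ε ≠ 0) (g : ℝ) (x y : Fin 2 → ℝ) :
    aeval (tohMatrix ω ε)ᵀ (1 + C g * X ^ 2) *ᵥ (vecAppend rfl x y : Fin 4 → ℝ) =
      vecAppend rfl ((1 + g) • x) ((g * ω) • x + (1 + g) • y) := by
  rw [aeval_one_add_C_mul_X_sq_mulVec, transpose_tohMatrix_sq_mulVec hε]
  ext i
  fin_cases i <;> simp [vecAppend_eq_ite] <;> ring

lemma dotProduct_tohMatrix_mulVec_smul (ω ε m c : ℝ) (x : Fin 2 → ℝ) :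
    (vecAppend rfl (m • x) x : Fin 4 → ℝ) ⬝ᵥ (tohMatrix ω ε *ᵥ vecAppend rfl (c • x) (m • x)) =
      m * (c + 1) * (x 0 ^ 2 + ε * (x 0 * x 1) - x 1 ^ 2) + m * (ω * m) / ε * (x 0 * x 1) := by
  simp [vecAppend_eq_ite, tohMatrix, mulVec, dotProduct, Fin.sum_univ_four]
  ring

lemma eq_zero_of_dotProduct_tohMatrix_pow_eq_zero {m : ℝ} (hε : ε ≠ 0) (hm : ω * m = -2)
    {x : Fin 2 → ℝ}
    (h1 : (vecAppend rfl (m • x) x : Fin 4 → ℝ) ⬝ᵥ (tohMatrix ω ε *ᵥ vecAppend rfl x (m • x)) = 0)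
    (h3 : (vecAppend rfl (m • x) x : Fin 4 → ℝ) ⬝ᵥ
      (tohMatrix ω ε ^ 3 *ᵥ vecAppend rfl x (m • x)) = 0) : x = 0 := by
  have hm0 : m ≠ 0 := by
    rintro rfl
    norm_num at hm
  have hsq : x + ω • m • x = (-1 : ℝ) • x := by
    rw [smul_smul, hm]
    module
  rw [pow_succ', ← mulVec_mulVec, tohMatrix_sq_mulVec hε, hsq,
    dotProduct_tohMatrix_mulVec_smul, hm] at h3
  rw [show tohMatrix ω ε *ᵥ vecAppend rfl x (m • x) =
    tohMatrix ω ε *ᵥ vecAppend rfl ((1 : ℝ) • x) (m • x) by rw [one_smul],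
    dotProduct_tohMatrix_mulVec_smul, hm] at h1
  have hprod : x 0 * x 1 = 0 := by simpa [hm0, hε] using h3
  have hsub : x 0 ^ 2 = x 1 ^ 2 := by simpa [hm0, hprod, sub_eq_zero] using h1
  ext i
  fin_cases i <;> simp <;> grind

lemma eq_zero_and_eq_zero_of_dotProduct_add_eq_zero {ι : Type*} [Fintype ι] {x y : ι → ℝ}
    (hω : |ω| < 2) (h : x ⬝ᵥ (x + ω • y) + y ⬝ᵥ y = 0) : x = 0 ∧ y = 0 := by
  have hsq : ω ^ 2 < 4 := by
    have := sq_lt_sq' (neg_lt_of_abs_lt hω) (lt_of_abs_lt hω)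
    linarith
  have hcomplete : ((2 : ℝ) • x + ω • y) ⬝ᵥ ((2 : ℝ) • x + ω • y) + (4 - ω ^ 2) * (y ⬝ᵥ y) = 0 := by
    simp only [dotProduct_add, add_dotProduct, dotProduct_smul, smul_dotProduct, smul_eq_mul,
      dotProduct_comm y x] at h ⊢
    linear_combination 4 * h
  have hnonneg (v : ι → ℝ) : 0 ≤ v ⬝ᵥ v := euclNorm_sq v ▸ sq_nonneg _
  obtain rfl : y = 0 := dotProduct_self_eq_zero.mp <| le_antisymm
    (by nlinarith [hnonneg ((2 : ℝ) • x + ω • y)]) (hnonneg y)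
  simpa using h

lemma exists_eq_smul_of_singular_of_orthogonal {ι : Type*} [Fintype ι] {x y : ι → ℝ} {g l : ℝ}
    (hω : ω ≠ 0) (hω2 : |ω| < 2) (hl : l ≠ 0) (hxy : x ≠ 0 ∨ y ≠ 0)
    (hx : (1 + g) • ((1 + g) • x + (g * ω) • y) = l • x)
    (hy : (g * ω) • ((1 + g) • x + (g * ω) • y) + (1 + g) • ((1 + g) • y) = l • y)
    (horth : ((1 + g) • x + (g * ω) • y) ⬝ᵥ (x + ω • y) + ((1 + g) • y) ⬝ᵥ y = 0) :
    x ≠ 0 ∧ ∃ m d : ℝ, ω * m = -2 ∧ d ≠ 0 ∧ y = m • x ∧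
      (1 + g) • x + (g * ω) • y = d • (m • x) ∧ (1 + g) • y = d • x := by
  have hg : g ≠ 0 := by
    rintro rfl
    have := eq_zero_and_eq_zero_of_dotProduct_add_eq_zero hω2 (by simpa using horth)
    tauto
  have ha : 1 + g ≠ 0 := by
    intro ha
    obtain rfl : x = 0 := by simpa [ha, hl] using hx.symm
    obtain rfl : y = 0 := by simpa [ha, hω, hg] using horth
    tauto
  obtain ⟨hx0, m, rfl, hm⟩ := exists_eq_smul_of_singular ha (mul_ne_zero hg hω) hxy hx hy
  have hres : (1 + g) • x + (g * ω) • m • x = ((1 + g) * m) • m • x := calc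
    _ = (1 + g + g * ω * m) • x := by module
    _ = ((1 + g) * m) • m • x := by rw [hm]; module
  have hm0 : m ≠ 0 := by
    rintro rfl
    simp [ha] at hm
  have hfactor : (1 + g) * m ^ 2 * (2 + ω * m) * (x ⬝ᵥ x) = 0 := by
    rw [← horth, hres]
    simp only [dotProduct_add, dotProduct_smul, smul_dotProduct, smul_eq_mul]
    ring
  have hωm : 2 + ω * m = 0 := by simpa [ha, hm0, hx0] using hfactor
  exact ⟨hx0, m, (1 + g) * m, by linarith, mul_ne_zero ha hm0, rfl, hres, by module⟩

lemma IsGmresPoly.transpose_mulVec_ne_smul_tohMatrix {b : Fin 4 → ℝ} {g l : ℝ} (hω : ω ≠ 0)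
    (hω2 : |ω| < 2) (hε : ε ≠ 0) (hl : l ≠ 0) (hb : b ≠ 0)
    (h : IsGmresPoly (tohMatrix ω ε) 3 b (1 + C g * X ^ 2)) :
    (aeval (tohMatrix ω ε) (1 + C g * X ^ 2))ᵀ *ᵥ
      (aeval (tohMatrix ω ε) (1 + C g * X ^ 2) *ᵥ b) ≠ l • b := by
  intro hsing
  have horth (n : ℕ) (hn : n ≠ 0) (hk : n ≤ 3) :=
    h.dotProduct_eq_zero (X_pow_mem_pikDirection hn hk)
  obtain ⟨x, y, rfl⟩ := exists_vecAppend_eq (m := 2) (n := 2) rfl b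
  have hxy : x ≠ 0 ∨ y ≠ 0 := by
    contrapose! hb
    ext i
    simp [hb, vecAppend_eq_ite]
  simp only [transpose_aeval, aeval_even_tohMatrix_mulVec hε,
    aeval_even_transpose_tohMatrix_mulVec hε, smul_vecAppend, vecAppend_inj, map_pow, aeval_X]
    at hsing horth
  have horth2 := horth 2 (by norm_num) (by norm_num)
  rw [tohMatrix_sq_mulVec hε, vecAppend_dotProduct_vecAppend] at horth2
  obtain ⟨hx0, m, d, hm, hd, rfl, hr1, hr2⟩ :=
    exists_eq_smul_of_singular_of_orthogonal hω hω2 hl hxy hsing.1 hsing.2 horth2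
  rw [hr1, hr2, ← smul_vecAppend] at horth
  refine hx0 (eq_zero_of_dotProduct_tohMatrix_pow_eq_zero hε hm ?_ ?_)
  · simpa [hd] using horth 1
  · simpa [hd] using horth 3

lemma IsWCPoly.comp_neg_X_ne_tohMatrix (hω : ω ≠ 0) (hω2 : |ω| < 2) (hε : ε ≠ 0)
    (hp : IsWCPoly (tohMatrix ω ε) 3 p) : p.comp (-X) ≠ p := by
  intro heven
  obtain ⟨g, rfl⟩ := hp.1.exists_eq_one_add_C_mul_X_sq heven
  obtain ⟨b, hb, h, hbound⟩ := isWCPoly_iff.mp hp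
  have hsing := h.transpose_mulVec_eq_sq_smul (isUnit_det_tohMatrix ω ε) hb hbound
  have hr : euclNorm (aeval (tohMatrix ω ε) (1 + C g * X ^ 2) *ᵥ b) ^ 2 ≠ 0 := fun h0 =>
    not_gmresBound_tohMatrix_zero hω hε (sq_eq_zero_iff.mp h0 ▸ hbound)
  have hb0 : b ≠ 0 := by
    rintro rfl
    simp [euclNorm_eq_zero.mpr] at hb
  exact h.transpose_mulVec_ne_smul_tohMatrix hω hω2 hε hr hb0 hsing

end Toh

theorem toh_worst_case_polynomial_not_unique_general (ω ε : ℝ) (hε : ε ≠ 0) :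
    (∀ (k : ℕ) (p : ℝ[X]), IsWCPoly (tohMatrix ω ε) k p →
      IsWCPoly (tohMatrix ω ε) k (p.comp (-X))) ∧
    (ω ≠ 0 → |ω| < 2 → ∀ p : ℝ[X], IsWCPoly (tohMatrix ω ε) 3 p → p.comp (-X) ≠ p) :=
  ⟨fun _ _ hp => hp.comp_neg_X_tohMatrix, fun hω hω2 _ hp => hp.comp_neg_X_ne_tohMatrix hω hω2 hε⟩

/-- For the Toh matrix `A = A(ω,ε)` with `0 < ω < 2`, `ε > 0`: if `p_k` is a
`k`-th worst-case GMRES polynomial of `A`, then so is `z ↦ p_k(-z)`; in particular, for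
`k = 3`, `p_3(z) ≠ p_3(-z)`, so the third worst-case GMRES polynomial of `A` is not
uniquely determined. -/
theorem toh_worst_case_polynomial_not_unique (ω ε : ℝ)
    (hω1 : 0 < ω) (hω2 : ω < 2) (hε : 0 < ε) :
    (∀ (k : ℕ) (p : Polynomial ℝ), IsWCPoly (tohMatrix ω ε) k p →
      IsWCPoly (tohMatrix ω ε) k (p.comp (-Polynomial.X))) ∧
    (∀ p : Polynomial ℝ, IsWCPoly (tohMatrix ω ε) 3 p → p.comp (-Polynomial.X) ≠ p) :=
  have h := toh_worst_case_polynomial_not_unique_general ω ε hε.ne'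
  ⟨h.1, h.2 hω1.ne' (abs_lt.mpr ⟨by linarith, hω2⟩)⟩
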